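/- Spectral form of the minimax correction filter with a smoothness prior and predefined reconstruction: let v : {0,…,N−1} → ℝ with v(i) ≠ 0 for all i, let s, w : {0,…,N−1} → ℝ, define w̃(i) = s(i)/v(i)², and set W := U diag(w) D^T, W̃ := U diag(w̃) D^T, and S^* := D diag(s) U^*. If R̃_{s w̃}(i) ≠ 0 and R̃_{ww}(i) ≠ 0 for every i ∈ {0,…,K−1}, then the correction transform (W^* W)^{−1} W^* W̃ (S^* W̃)^{−1} equals the K×K diagonal matrix with i-th diagonal entry R̃_{w w̃}(i)/(R̃_{s w̃}(i)·R̃_{ww}(i)). -/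

import Mathlib

open Matrix BigOperators

noncomputable section

/-- Downsampling matrix `D ∈ ℂ^{K×N}` with `N = M·K`: `D i j = 1` iff `j ≡ i (mod K)`. -/
def Dmat (K M : ℕ) : Matrix (Fin K) (Fin (M * K)) ℂ :=
  Matrix.of fun i j => if (j : ℕ) % K = (i : ℕ) then 1 else 0

/-- The index `i + K·ℓ` viewed in `Fin (M·K)`. -/
def fold (K M : ℕ) (i : Fin K) (ℓ : Fin M) : Fin (M * K) :=
  ⟨(i : ℕ) + K * (ℓ : ℕ), by
    have hi := i.isLt
    calc (i : ℕ) + K * (ℓ : ℕ) < K + K * (ℓ : ℕ) := by omega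
      _ = K * ((ℓ : ℕ) + 1) := by ring
      _ ≤ K * M := Nat.mul_le_mul_left K ℓ.isLt
      _ = M * K := Nat.mul_comm K M⟩

/-- Sampled cross-correlation `R̃_{fg}(i) = ∑_{ℓ<M} f(i+Kℓ) g(i+Kℓ)`. -/
def Rtil (K M : ℕ) (f g : Fin (M * K) → ℝ) (i : Fin K) : ℝ :=
  ∑ ℓ : Fin M, f (fold K M i ℓ) * g (fold K M i ℓ)

/-- Sampling matrix `S^* = D diag(s) U^*`. -/
def SamplingMat (K M : ℕ) (U : Matrix (Fin (M * K)) (Fin (M * K)) ℂ)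
    (s : Fin (M * K) → ℝ) : Matrix (Fin K) (Fin (M * K)) ℂ :=
  Dmat K M * Matrix.diagonal (fun j => (s j : ℂ)) * Uᴴ

/-- Synthesis matrix `A = U diag(a) Dᵀ`. -/
def SynthesisMat (K M : ℕ) (U : Matrix (Fin (M * K)) (Fin (M * K)) ℂ)
    (a : Fin (M * K) → ℝ) : Matrix (Fin (M * K)) (Fin K) ℂ :=
  U * Matrix.diagonal (fun j => (a j : ℂ)) * (Dmat K M)ᵀ

/-!
Conjugating a diagonal matrix by `D` folds its diagonal over the residue classes mod `K`, so it is
again diagonal; since `Uᴴ * U = 1` cancels between analysis and synthesis, every factor of the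
correction transform is a diagonal matrix of sampled cross-correlations.
-/

theorem inv_diagonal_of_ne_zero {n 𝕜 : Type*} [Fintype n] [DecidableEq n] [Field 𝕜] {d : n → 𝕜}
    (hd : ∀ i, d i ≠ 0) : (diagonal d)⁻¹ = diagonal fun i => (d i)⁻¹ := by
  apply inv_eq_right_inv
  simp only [diagonal_mul_diagonal, mul_inv_cancel₀ (hd _), diagonal_one]

section Folding

variable {K M : ℕ}

theorem finProdFinEquiv_eq_fold (ℓ : Fin M) (i : Fin K) :
    finProdFinEquiv (ℓ, i) = fold K M i ℓ :=
  rfl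

theorem sum_eq_sum_sum_fold {α : Type*} [AddCommMonoid α] (f : Fin (M * K) → α) :
    ∑ j, f j = ∑ i, ∑ ℓ, f (fold K M i ℓ) := by
  rw [← finProdFinEquiv.sum_comp, Fintype.sum_prod_type_right]
  simp only [finProdFinEquiv_eq_fold]

theorem dmat_apply_fold (i j : Fin K) (ℓ : Fin M) :
    Dmat K M i (fold K M j ℓ) = if i = j then 1 else 0 := by
  simp [Dmat, fold, Nat.mod_eq_of_lt j.isLt, Fin.ext_iff, eq_comm]

theorem dmat_mul_diagonal_mul_transpose (d : Fin (M * K) → ℂ) :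
    Dmat K M * diagonal d * (Dmat K M)ᵀ = diagonal fun i => ∑ ℓ, d (fold K M i ℓ) := by
  ext i k
  simp only [mul_apply (M := Dmat K M * diagonal d), mul_diagonal, transpose_apply,
    sum_eq_sum_sum_fold, dmat_apply_fold, diagonal_apply]
  obtain rfl | hik := eq_or_ne i k
  · simp
  · simp [hik]

theorem conjTranspose_dmat : (Dmat K M)ᴴ = (Dmat K M)ᵀ := by
  ext j i
  simp [Dmat, apply_ite]

theorem conjTranspose_synthesisMat (U : Matrix (Fin (M * K)) (Fin (M * K)) ℂ)
    (a : Fin (M * K) → ℝ) : (SynthesisMat K M U a)ᴴ = SamplingMat K M U a := by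
  have hdiag : (diagonal fun j => (a j : ℂ))ᴴ = diagonal fun j => (a j : ℂ) :=
    isHermitian_diagonal_of_self_adjoint _ (funext fun j => Complex.conj_ofReal (a j))
  rw [SynthesisMat, SamplingMat, ← conjTranspose_dmat, conjTranspose_mul, conjTranspose_mul,
    conjTranspose_conjTranspose, hdiag, Matrix.mul_assoc]

theorem samplingMat_mul_synthesisMat {U : Matrix (Fin (M * K)) (Fin (M * K)) ℂ}
    (hU : U ∈ unitaryGroup (Fin (M * K)) ℂ) (f g : Fin (M * K) → ℝ) :
    SamplingMat K M U f * SynthesisMat K M U g = diagonal fun i => (Rtil K M f g i : ℂ) := by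
  have hUU : Uᴴ * U = 1 := mem_unitaryGroup_iff'.mp hU
  calc SamplingMat K M U f * SynthesisMat K M U g
      = Dmat K M * diagonal (fun j => (f j : ℂ)) * (Uᴴ * U) *
          diagonal (fun j => (g j : ℂ)) * (Dmat K M)ᵀ := by
        simp only [SamplingMat, SynthesisMat, Matrix.mul_assoc]
    _ = Dmat K M * diagonal (fun j => (f j : ℂ) * g j) * (Dmat K M)ᵀ := by
        rw [hUU, Matrix.mul_one, Matrix.mul_assoc (Dmat K M), diagonal_mul_diagonal]
    _ = diagonal fun i => (Rtil K M f g i : ℂ) := by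
        simp only [dmat_mul_diagonal_mul_transpose, Rtil, Complex.ofReal_sum, Complex.ofReal_mul]

theorem smoothness_minimax_correction_spectral_form_general
    {U : Matrix (Fin (M * K)) (Fin (M * K)) ℂ} (hU : U ∈ unitaryGroup (Fin (M * K)) ℂ)
    (s w a : Fin (M * K) → ℝ) (hsa : ∀ i, Rtil K M s a i ≠ 0) (hww : ∀ i, Rtil K M w w i ≠ 0) :
    ((SynthesisMat K M U w)ᴴ * SynthesisMat K M U w)⁻¹
        * ((SynthesisMat K M U w)ᴴ * SynthesisMat K M U a)
        * (SamplingMat K M U s * SynthesisMat K M U a)⁻¹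
      = diagonal fun i =>
          ((Rtil K M w a i / (Rtil K M s a i * Rtil K M w w i) : ℝ) : ℂ) := by
  simp only [conjTranspose_synthesisMat, samplingMat_mul_synthesisMat hU]
  rw [inv_diagonal_of_ne_zero fun i => Complex.ofReal_ne_zero.mpr (hww i),
    inv_diagonal_of_ne_zero fun i => Complex.ofReal_ne_zero.mpr (hsa i),
    diagonal_mul_diagonal, diagonal_mul_diagonal]
  congr 1 with i
  push_cast
  field_simp

end Folding

/-- Spectral form of the minimax correction filter with a smoothness prior and
predefined reconstruction: `(W^*W)⁻¹ W^* W̃ (S^* W̃)⁻¹` is diagonal with entries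
`R̃_{w w̃}(i)/(R̃_{s w̃}(i)·R̃_{ww}(i))`, where `w̃(i) = s(i)/v(i)²`. -/
theorem smoothness_minimax_correction_spectral_form (K M : ℕ) (hK : 0 < K) (hM : 0 < M)
    (U : Matrix (Fin (M * K)) (Fin (M * K)) ℂ)
    (hU : U ∈ Matrix.unitaryGroup (Fin (M * K)) ℂ)
    (s w v : Fin (M * K) → ℝ) (hv : ∀ i, v i ≠ 0)
    (hRswt : ∀ i : Fin K, Rtil K M s (fun j => s j / (v j) ^ 2) i ≠ 0)
    (hRww : ∀ i : Fin K, Rtil K M w w i ≠ 0) :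
    ((SynthesisMat K M U w)ᴴ * SynthesisMat K M U w)⁻¹
        * ((SynthesisMat K M U w)ᴴ * SynthesisMat K M U (fun j => s j / (v j) ^ 2))
        * (SamplingMat K M U s * SynthesisMat K M U (fun j => s j / (v j) ^ 2))⁻¹
      = Matrix.diagonal (fun i : Fin K =>
          ((Rtil K M w (fun j => s j / (v j) ^ 2) i
              / (Rtil K M s (fun j => s j / (v j) ^ 2) i * Rtil K M w w i) : ℝ) : ℂ)) :=
  smoothness_minimax_correction_spectral_form_general hU s w _ hRswt hRww
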